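/- Let M = lcm(m_t, t₁, …, t_l), where m_t is the multiplicative order of θ_t. For all u, v ∈ 𝐒, the following are equivalent: (i) ⟨σ_l^r(u), v⟩ = 0 for all 0 ≤ r ≤ M−1; (ii) H_w(u, v) = 0 for all 0 ≤ w ≤ M−1. -/

import Mathlib

/-!
The theorem rests on the identity `⟨σ_l^r(u), v⟩ = θ^r (H_k(u, v))`, valid whenever `M ∣ r + k`.
Indeed the entries of `σ_l^r(u)` are `θ^r` of entries of `u` read `r` places back, which is the same
as `k` places forward because each block length divides `r + k` (`blockShift_iterate_apply`); and
`θ^r` applied to `θ^k(v_{j,i})` is `v_{j,i}` because the order of `θ` divides `r + k`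
(`iterate_hermCoeff`). Since `θ^r` is injective, one side vanishes exactly when the other does, and
`r ↦ -r mod M` permutes the range `0, …, M - 1`.
-/

open Polynomial

noncomputable section

/-- The ring `S = F[V]/(V² − V) = F + vF`. -/
abbrev Sring (F : Type) [Field F] : Type := AdjoinRoot (X ^ 2 - X : F[X])

/-- The element `v` (the image of `V`) in `S`, satisfying `v ^ 2 = v`. -/
def vS (F : Type) [Field F] : Sring F := AdjoinRoot.root (X ^ 2 - X : F[X])

/-- The skew cyclic shift `σ(c₀, …, c_{n−1}) = (θ(c_{n−1}), θ(c₀), …, θ(c_{n−2}))`. -/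
def sShift {R : Type} (θ : R → R) {n : ℕ} (c : Fin n → R) : Fin n → R :=
  fun i => θ (c ((finRotate n).symm i))

/-- The blockwise skew shift `σ_l`. -/
def blockShift {R : Type} (θ : R → R) {l : ℕ} {t : Fin l → ℕ}
    (c : ∀ j : Fin l, Fin (t j) → R) : ∀ j : Fin l, Fin (t j) → R :=
  fun j => sShift θ (c j)

/-- `θ` is the Galois automorphism `a + v·b ↦ a^{p^t} + v·b^{p^t}` of `S`. -/
def IsGaloisAut (p t : ℕ) {F : Type} [Field F] (θ : RingAut (Sring F)) : Prop :=
  ∀ a b : F,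
    θ (algebraMap F (Sring F) a + vS F * algebraMap F (Sring F) b) =
      algebraMap F (Sring F) (a ^ p ^ t) + vS F * algebraMap F (Sring F) (b ^ p ^ t)

/-- A set is an SGQC code iff it is (the carrier of) a submodule closed under `σ_l`. -/
def IsSGQC {R : Type} [CommRing R] (θ : R → R) {l : ℕ} {t : Fin l → ℕ}
    (C : Set (∀ j : Fin l, Fin (t j) → R)) : Prop :=
  ∃ M : Submodule R (∀ j : Fin l, Fin (t j) → R),
    (M : Set (∀ j : Fin l, Fin (t j) → R)) = C ∧ ∀ c ∈ M, blockShift θ c ∈ M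

/-- A set is a skew cyclic code iff it is (the carrier of) a submodule closed under `σ`. -/
def IsSkewCyclic {R : Type} [CommRing R] (θ : R → R) {n : ℕ} (K : Set (Fin n → R)) : Prop :=
  ∃ M : Submodule R (Fin n → R), (M : Set (Fin n → R)) = K ∧ ∀ x ∈ M, sShift θ x ∈ M

/-- The Euclidean inner product. -/
def euclidInner {R : Type} [CommRing R] {l : ℕ} {t : Fin l → ℕ}
    (a b : ∀ j : Fin l, Fin (t j) → R) : R :=
  ∑ j, ∑ i, a j i * b j i

/-- The Hamming weight: the number of nonzero coordinates (over all blocks). -/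
def hammingWt {R : Type} [CommRing R] {l : ℕ} {t : Fin l → ℕ}
    (x : ∀ j : Fin l, Fin (t j) → R) : ℕ :=
  ∑ j, Nat.card {i : Fin (t j) // x j i ≠ 0}

/-- The SGQC code generated by a set: the smallest submodule containing it closed under `σ_l`. -/
def sgqcGen {R : Type} [CommRing R] (θ : R → R) {l : ℕ} {t : Fin l → ℕ}
    (X : Set (∀ j : Fin l, Fin (t j) → R)) : Submodule R (∀ j : Fin l, Fin (t j) → R) :=
  sInf {M | X ⊆ (M : Set _) ∧ ∀ c ∈ M, blockShift θ c ∈ M}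

/-- The skew cyclic code generated by a set: the smallest submodule containing it closed under `σ`. -/
def scGen {R : Type} [CommRing R] (θ : R → R) {n : ℕ} (X : Set (Fin n → R)) :
    Submodule R (Fin n → R) :=
  sInf {M | X ⊆ (M : Set _) ∧ ∀ x ∈ M, sShift θ x ∈ M}

/-- The `w`-th Hermitian coefficient `H_w(u, v)`. -/
def hermCoeff {R : Type} [CommRing R] (θ : R → R) {l : ℕ} {t : Fin l → ℕ}
    (ht : ∀ j, 0 < t j) (w : ℕ) (u v : ∀ j : Fin l, Fin (t j) → R) : R :=
  ∑ j, ∑ i : Fin (t j), u j ⟨((i : ℕ) + w) % t j, Nat.mod_lt _ (ht j)⟩ * θ^[w] (v j i)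

theorem finRotate_symm_add_mod {n : ℕ} (i : Fin n) (k : ℕ) :
    (((finRotate n).symm i : ℕ) + (k + 1)) % n = ((i : ℕ) + k) % n := by
  obtain ⟨i, rfl⟩ := (finRotate n).surjective i
  rw [Equiv.symm_apply_apply]
  cases n with
  | zero => exact i.elim0
  | succ n =>
    rw [finRotate_succ_apply, Fin.val_add, Fin.val_one', Nat.add_mod_mod, Nat.mod_add_mod]
    congr 1
    ring

/-- Shifting back by `r` places agrees with reading `k` places forward when the block length
divides `r + k`. -/
theorem blockShift_iterate_apply {R : Type} (θ : R → R) {l : ℕ} {t : Fin l → ℕ}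
    (ht : ∀ j, 0 < t j) (u : ∀ j : Fin l, Fin (t j) → R) (j : Fin l) (r k : ℕ)
    (h : t j ∣ r + k) (i : Fin (t j)) :
    (blockShift θ)^[r] u j i = θ^[r] (u j ⟨((i : ℕ) + k) % t j, Nat.mod_lt _ (ht j)⟩) := by
  induction r generalizing k i with
  | zero =>
    rw [Nat.zero_add] at h
    have hi : ((i : ℕ) + k) % t j = i := by
      rw [Nat.add_mod, Nat.mod_eq_zero_of_dvd h, Nat.add_zero, Nat.mod_mod, Nat.mod_eq_of_lt i.2]
    simp only [hi, Function.iterate_zero, id]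
  | succ r ih =>
    rw [Function.iterate_succ_apply', Function.iterate_succ_apply']
    change θ ((blockShift θ)^[r] u j ((finRotate (t j)).symm i)) = _
    rw [ih (k + 1) (by rwa [show r + (k + 1) = r + 1 + k by ring])]
    simp only [finRotate_symm_add_mod]

/-- The Euclidean product of a shifted word is a conjugate of a Hermitian coefficient. -/
theorem iterate_hermCoeff {R : Type} [CommRing R] (θ : RingAut R) {l : ℕ} {t : Fin l → ℕ}
    (ht : ∀ j, 0 < t j) (u v : ∀ j : Fin l, Fin (t j) → R) (r k : ℕ)
    (hord : orderOf θ ∣ r + k) (hlen : ∀ j, t j ∣ r + k) :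
    euclidInner ((blockShift (⇑θ))^[r] u) v = (⇑θ)^[r] (hermCoeff (⇑θ) ht k u v) := by
  have hpow : ∀ (m : ℕ) (x : R), (⇑θ)^[m] x = (θ ^ m) x := by
    intro m x
    induction m with
    | zero => simp
    | succ m ih => rw [Function.iterate_succ_apply', ih, pow_succ', RingAut.mul_apply]
  have hone : ∀ x : R, (θ ^ r) ((θ ^ k) x) = x := by
    intro x
    rw [← RingAut.mul_apply, ← pow_add, orderOf_dvd_iff_pow_eq_one.mp hord, RingAut.one_apply]
  unfold euclidInner hermCoeff
  simp only [blockShift_iterate_apply _ ht u _ r k (hlen _), hpow, map_sum, map_mul, hone]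

/-- With `M = lcm(m_t, t₁, …, t_l)`, for all `u, v ∈ 𝐒` the following are
equivalent: (i) `⟨σ_l^r(u), v⟩ = 0` for all `0 ≤ r ≤ M−1`; (ii) `H_w(u, v) = 0` for all
`0 ≤ w ≤ M−1`. -/
theorem statement17 (p d t : ℕ) [Fact p.Prime] (hd : 0 < d)
    (F : Type) [Field F] [Fintype F] (hF : Fintype.card F = p ^ d)
    (θ : RingAut (Sring F)) (hθ : IsGaloisAut p t θ)
    (l : ℕ) (tt : Fin l → ℕ) (htt : ∀ j, 0 < tt j)
    (M : ℕ) (hM : M = Nat.lcm (orderOf θ) (Finset.univ.lcm tt)) :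
    ∀ u w : ∀ j : Fin l, Fin (tt j) → Sring F,
      ((∀ r, r < M → euclidInner ((blockShift (⇑θ))^[r] u) w = 0) ↔
        (∀ k, k < M → hermCoeff (⇑θ) htt k u w = 0)) := by
  intro u w
  have hord : orderOf θ ∣ M := hM ▸ Nat.dvd_lcm_left _ _
  have hlen : ∀ j, tt j ∣ M := fun j =>
    (Finset.dvd_lcm (Finset.mem_univ j)).trans (hM ▸ Nat.dvd_lcm_right _ _)
  have key : ∀ r k, M ∣ r + k →
      (euclidInner ((blockShift (⇑θ))^[r] u) w = 0 ↔ hermCoeff (⇑θ) htt k u w = 0) := by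
    intro r k h
    rw [iterate_hermCoeff θ htt u w r k (hord.trans h) fun j => (hlen j).trans h]
    have h0 : (⇑θ)^[r] 0 = 0 := Function.iterate_fixed (map_zero θ) r
    exact ⟨fun h => θ.injective.iterate r (h.trans h0.symm), fun h => by rw [h, h0]⟩
  have neg : ∀ r, r < M → ∃ k, k < M ∧ M ∣ r + k := by
    intro r hr
    rcases Nat.eq_zero_or_pos r with rfl | hpos
    · exact ⟨0, hr, dvd_zero M⟩
    · exact ⟨M - r, by omega, by rw [Nat.add_sub_cancel' hr.le]⟩
  constructor
  · intro h k hk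
    obtain ⟨r, hr, hrk⟩ := neg k hk
    exact (key r k (by rwa [Nat.add_comm])).mp (h r hr)
  · intro h r hr
    obtain ⟨k, hk, hrk⟩ := neg r hr
    exact (key r k hrk).mpr (h k hk)
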